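/- The complexity function p of the infinite word u (with l_i = 2^{2·2^i+4}, m_i = 2^{8·2^i}, n_i = 2^{10·2^i}) satisfies p(n) ≤ 3n + 1 for all n ≥ 1, and liminf_{n→∞} p(n)/n = 2, while u does not admit uniform frequencies of letters. -/

import Mathlib

/-- The `k`-th power of a finite word `w` (concatenation of `k` copies). -/
def wpow (w : List Bool) (k : ℕ) : List Bool := (List.replicate k w).flatten

/-- The pair of words `(u_i, v_i)`:  `u_0 = 0`, `v_0 = 1`,
`u_{i+1} = u_i^{m_i} v_i^{l_i}`, `v_{i+1} = u_i^{m_i} v_i^{n_i}`. -/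
def uvSeq (l m n : ℕ → ℕ) : ℕ → List Bool × List Bool
  | 0 => ([false], [true])
  | i + 1 =>
      (wpow (uvSeq l m n i).1 (m i) ++ wpow (uvSeq l m n i).2 (l i),
       wpow (uvSeq l m n i).1 (m i) ++ wpow (uvSeq l m n i).2 (n i))

/-- The substitution `σ_h` : `0 ↦ 0^{m_h} 1^{l_h}`, `1 ↦ 0^{m_h} 1^{n_h}`. -/
def subw (l m n : ℕ → ℕ) (h : ℕ) (w : List Bool) : List Bool :=
  w.flatMap fun c => List.replicate (m h) false ++ List.replicate (if c then n h else l h) true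

/-- `wordIter i h = σ_h σ_{h+1} ⋯ σ_{h+i-1}(0)`. -/
def wordIter (l m n : ℕ → ℕ) : ℕ → ℕ → List Bool
  | 0, _ => [false]
  | i + 1, h => subw l m n h (wordIter l m n i (h + 1))

/-- The infinite word `u^{(h)} = lim_i σ_h ⋯ σ_{h+i-1}(0)`. -/
def limWord (l m n : ℕ → ℕ) (h : ℕ) (k : ℕ) : Bool :=
  (wordIter l m n (k + 1) h).getD k false

/-- `w` is a factor of the infinite word `U`. -/
def IsFactor (U : ℕ → Bool) (w : List Bool) : Prop :=
  ∃ k, w = (List.range w.length).map fun j => U (k + j)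

/-- `σ_0 σ_1 ⋯ σ_{h+i-1}` starting at `h`, applied to `w`. -/
def subComp (l m n : ℕ → ℕ) : ℕ → ℕ → List Bool → List Bool
  | 0, _, w => w
  | i + 1, h, w => subw l m n h (subComp l m n i (h + 1) w)

/-- `\hat{σ}_h(w) = 1^{l_h} σ_h(w) 0^{m_h} 1^{l_h}`. -/
def hatw (l m n : ℕ → ℕ) (h : ℕ) (w : List Bool) : List Bool :=
  List.replicate (l h) true ++ subw l m n h w ++
    List.replicate (m h) false ++ List.replicate (l h) true

/-- `hatComp i h w = \hat{σ}_h ⋯ \hat{σ}_{h+i-1}(w)`. -/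
def hatComp (l m n : ℕ → ℕ) : ℕ → ℕ → List Bool → List Bool
  | 0, _, w => w
  | i + 1, h, w => hatw l m n h (hatComp l m n i (h + 1) w)

/-- The complexity function of the infinite word `U`. -/
noncomputable def complexityFn (U : ℕ → Bool) (nn : ℕ) : ℕ :=
  Set.ncard {w : List Bool | w.length = nn ∧ IsFactor U w}


/-! ### Basic facts on the substitutions -/

/-- The image of one letter. -/
def blk (l m n : ℕ → ℕ) (h : ℕ) (c : Bool) : List Bool :=
  List.replicate (m h) false ++ List.replicate (if c then n h else l h) true

lemma subw_nil (l m n : ℕ → ℕ) (h : ℕ) : subw l m n h [] = [] := rfl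

lemma subw_cons (l m n : ℕ → ℕ) (h : ℕ) (c : Bool) (w : List Bool) :
    subw l m n h (c :: w) = blk l m n h c ++ subw l m n h w := by
  simp [subw, blk]

lemma subw_append (l m n : ℕ → ℕ) (h : ℕ) (v w : List Bool) :
    subw l m n h (v ++ w) = subw l m n h v ++ subw l m n h w := by
  simp [subw]

lemma subw_single (l m n : ℕ → ℕ) (h : ℕ) (c : Bool) :
    subw l m n h [c] = blk l m n h c := by
  simp [subw, blk]

lemma subw_mono (l m n : ℕ → ℕ) (h : ℕ) {v w : List Bool} (hv : v <:+: w) :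
    subw l m n h v <:+: subw l m n h w := by
  obtain ⟨s, t, rfl⟩ := hv
  exact ⟨subw l m n h s, subw l m n h t, by simp [subw_append]⟩

lemma rep_split {k j : ℕ} (c : Bool) (hj : j < k) :
    List.replicate k c = List.replicate (k - j - 1) c ++ c :: List.replicate j c := by
  rw [← List.replicate_succ, List.replicate_append_replicate]
  congr 1; omega

lemma rep_split_le {k j : ℕ} (c : Bool) (hj : j ≤ k) :
    List.replicate k c = List.replicate (k - j) c ++ List.replicate j c := by
  rw [List.replicate_append_replicate]
  congr 1; omega

lemma rep_cons {k : ℕ} (c : Bool) (hk : 0 < k) :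
    List.replicate k c = c :: List.replicate (k - 1) c := by
  rw [← List.replicate_succ]; congr 1; omega

/-- Two words that differ just before `Z`: a common suffix is a suffix of `Z`. -/
lemma suffix_diff {w p q Z : List Bool} {a b : Bool} (hab : a ≠ b)
    (h1 : w <:+ p ++ a :: Z) (h2 : w <:+ q ++ b :: Z) : w <:+ Z := by
  by_contra hc
  have hlen : Z.length < w.length := by
    by_contra hl
    exact hc (List.suffix_of_suffix_length_le h1
      (List.suffix_append_of_suffix (List.suffix_cons a Z)) (by omega))
  have k1 : a :: Z <:+ w := List.suffix_of_suffix_length_le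
    (List.suffix_append p (a :: Z)) h1 (by simp; omega)
  have k2 : b :: Z <:+ w := List.suffix_of_suffix_length_le
    (List.suffix_append q (b :: Z)) h2 (by simp; omega)
  have := List.suffix_of_suffix_length_le k1 k2 (by simp)
  have := this.eq_of_length (by simp)
  simp at this
  exact hab this

lemma common_suffix (a b : List Bool) :
    a <:+ b ∨ b <:+ a ∨ ∃ p q v c d, c ≠ d ∧ a = p ++ c :: v ∧ b = q ++ d :: v := by
  induction a using List.reverseRecOn generalizing b with
  | nil => left; simp
  | append_singleton a x ih =>
    rcases List.eq_nil_or_concat b with rfl | ⟨b, y, rfl⟩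
    · right; left; simp
    · simp only [List.concat_eq_append]
      by_cases hxy : x = y
      · subst hxy
        rcases ih b with h | h | ⟨p, q, v, c, d, hcd, rfl, rfl⟩
        · left; obtain ⟨t, rfl⟩ := h; exact ⟨t, by simp⟩
        · right; left; obtain ⟨t, rfl⟩ := h; exact ⟨t, by simp⟩
        · right; right; exact ⟨p, q, v ++ [x], c, d, hcd, by simp, by simp⟩
      · right; right; exact ⟨a, b, [], x, y, hxy, rfl, rfl⟩

/-- Parsing a prefix of a block. -/
lemma blk_parse {M K : ℕ} {P t : List Bool} {c : Bool}
    (hp : P ++ c :: t = List.replicate M false ++ List.replicate K true) :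
    (c = false ∧ ∃ j, j < M ∧ P = List.replicate j false) ∨
    (c = true ∧ ∃ j, j < K ∧ P = List.replicate M false ++ List.replicate j true) := by
  rcases List.append_eq_append_iff.1 hp with ⟨a, h1, h2⟩ | ⟨a, h1, h2⟩
  · rcases a with _ | ⟨y, a⟩
    · right
      simp at h1 h2
      have : c = true := by
        have : c ∈ List.replicate K true := by rw [← h2]; simp
        exact (List.mem_replicate.1 this).2
      refine ⟨this, 0, ?_, by simp [h1]⟩
      rcases K with _ | K
      · simp at h2
      · omega
    · left
      simp at h2
      obtain ⟨rfl, h2⟩ := h2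
      have hl := congrArg List.length h1
      simp at hl
      refine ⟨?_, P.length, by omega, ?_⟩
      · have : c ∈ List.replicate M false := by rw [h1]; simp
        exact (List.mem_replicate.1 this).2
      · rw [List.eq_replicate_iff]
        refine ⟨rfl, fun b hb => ?_⟩
        have : b ∈ List.replicate M false := by rw [h1]; simp [hb]
        exact (List.mem_replicate.1 this).2
  · right
    have hl := congrArg List.length h2
    simp at hl
    refine ⟨?_, a.length, by omega, ?_⟩
    · have : c ∈ List.replicate K true := by rw [h2]; simp
      exact (List.mem_replicate.1 this).2
    · rw [h1]
      congr 1
      rw [List.eq_replicate_iff]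
      refine ⟨rfl, fun b hb => ?_⟩
      have : b ∈ List.replicate K true := by rw [h2]; simp [hb]
      exact (List.mem_replicate.1 this).2

/-- Parsing a prefix of the image of a word. -/
lemma subw_parse (l m n : ℕ → ℕ) (h : ℕ) (v : List Bool) {P t : List Bool} {c : Bool}
    (hp : P ++ c :: t = subw l m n h v) :
    (c = false ∧ ∃ y x z j, v = y ++ x :: z ∧ j < m h ∧
      P = subw l m n h y ++ List.replicate j false) ∨
    (c = true ∧ ∃ y x z j, v = y ++ x :: z ∧ j < (if x then n h else l h) ∧
      P = subw l m n h y ++ List.replicate (m h) false ++ List.replicate j true) := by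
  induction v generalizing P with
  | nil => simp [subw_nil] at hp
  | cons a v ih =>
    rw [subw_cons] at hp
    have key : (∃ t', P ++ c :: t' = blk l m n h a) ∨
        (∃ P', P = blk l m n h a ++ P' ∧ P' ++ c :: t = subw l m n h v) := by
      rcases List.append_eq_append_iff.1 hp with ⟨s, h1, h2⟩ | ⟨s, h1, h2⟩
      · rcases s with _ | ⟨y, s⟩
        · right; refine ⟨[], by simpa using h1.symm, by simpa using h2⟩
        · left
          simp at h2
          exact ⟨s, by rw [h1, h2.1]⟩
      · right; exact ⟨s, h1, h2.symm⟩
    rcases key with ⟨t', h1⟩ | ⟨P', rfl, h2⟩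
    · rcases blk_parse h1 with ⟨hc, j, hj, hP⟩ | ⟨hc, j, hj, hP⟩
      · left; exact ⟨hc, [], a, v, j, rfl, hj, by simp [hP, subw_nil]⟩
      · right; exact ⟨hc, [], a, v, j, rfl, hj, by simp [hP, subw_nil]⟩
    · rcases ih h2 with ⟨hc, y, x, z, j, rfl, hj, hP⟩ | ⟨hc, y, x, z, j, rfl, hj, hP⟩
      · left; exact ⟨hc, a :: y, x, z, j, rfl, hj, by simp [hP, subw_cons]⟩
      · right; exact ⟨hc, a :: y, x, z, j, rfl, hj, by simp [hP, subw_cons]⟩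

/-! ### The hat maps -/

lemma blk_suffix_cons (l m n : ℕ → ℕ) (hm : ∀ i, 2 ≤ m i) (hn : ∀ i, l i + 2 ≤ n i)
    (h : ℕ) (c : Bool) : ∃ s, blk l m n h c = s ++ c :: List.replicate (l h) true := by
  cases c
  · refine ⟨List.replicate (m h - 0 - 1) false, ?_⟩
    simp only [blk]
    rw [rep_split (j := 0) false (by have := hm h; omega)]
    simp
  · refine ⟨List.replicate (m h) false ++ List.replicate (n h - l h - 1) true, ?_⟩
    have := hn h
    simp only [blk]
    rw [if_pos trivial, rep_split (k := n h) (j := l h) true (by omega)]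
    simp

lemma hat_cons (l m n : ℕ → ℕ) (hm : ∀ i, 2 ≤ m i) (hn : ∀ i, l i + 2 ≤ n i)
    (h : ℕ) (c : Bool) (v : List Bool) : c :: hatw l m n h v <:+ hatw l m n h (c :: v) := by
  obtain ⟨s, hs⟩ := blk_suffix_cons l m n hm hn h c
  refine ⟨List.replicate (l h) true ++ s, ?_⟩
  simp [hatw, subw_cons, hs]

lemma hat_suffix (l m n : ℕ → ℕ) (hm : ∀ i, 2 ≤ m i) (hn : ∀ i, l i + 2 ≤ n i)
    (h : ℕ) {v w : List Bool} (hv : v <:+ w) : hatw l m n h v <:+ hatw l m n h w := by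
  obtain ⟨t, rfl⟩ := hv
  induction t with
  | nil => simp
  | cons c t ih =>
    exact ih.trans ((List.suffix_cons _ _).trans (hat_cons l m n hm hn h c (t ++ v)))

lemma hatComp_suffix (l m n : ℕ → ℕ) (hm : ∀ i, 2 ≤ m i) (hn : ∀ i, l i + 2 ≤ n i)
    (i h : ℕ) {v w : List Bool} (hv : v <:+ w) :
    hatComp l m n i h v <:+ hatComp l m n i h w := by
  induction i generalizing h with
  | zero => exact hv
  | succ i ih => exact hat_suffix l m n hm hn h (ih (h + 1))

lemma hatComp_cons (l m n : ℕ → ℕ) (hm : ∀ i, 2 ≤ m i) (hn : ∀ i, l i + 2 ≤ n i)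
    (i h : ℕ) (c : Bool) (v : List Bool) :
    c :: hatComp l m n i h v <:+ hatComp l m n i h (c :: v) := by
  induction i generalizing h with
  | zero => exact List.suffix_refl _
  | succ i ih =>
    exact (hat_cons l m n hm hn h c _).trans (hat_suffix l m n hm hn h (ih (h + 1)))

lemma hatComp_succ (l m n : ℕ → ℕ) (i h : ℕ) (v : List Bool) :
    hatComp l m n (i + 1) h v = hatComp l m n i h (hatw l m n (h + i) v) := by
  induction i generalizing h with
  | zero => rfl
  | succ i ih =>
    have : hatComp l m n (i + 1 + 1) h v = hatw l m n h (hatComp l m n (i + 1) (h + 1) v) := rfl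
    rw [this, ih]
    have e : h + 1 + i = h + (i + 1) := by omega
    rw [e]; rfl

lemma subComp_succ (l m n : ℕ → ℕ) (i h : ℕ) (v : List Bool) :
    subComp l m n (i + 1) h v = subComp l m n i h (subw l m n (h + i) v) := by
  induction i generalizing h with
  | zero => rfl
  | succ i ih =>
    have : subComp l m n (i + 1 + 1) h v = subw l m n h (subComp l m n (i + 1) (h + 1) v) := rfl
    rw [this, ih]
    have e : h + 1 + i = h + (i + 1) := by omega
    rw [e]; rfl

lemma subComp_append (l m n : ℕ → ℕ) (i h : ℕ) (v w : List Bool) :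
    subComp l m n i h (v ++ w) = subComp l m n i h v ++ subComp l m n i h w := by
  induction i generalizing h with
  | zero => rfl
  | succ i ih => simp [subComp, ih, subw_append]

lemma wordIter_eq (l m n : ℕ → ℕ) (i h : ℕ) :
    wordIter l m n i h = subComp l m n i h [false] := by
  induction i generalizing h with
  | zero => rfl
  | succ i ih => simp [wordIter, subComp, ih]

/-! ### Upper description of right special words -/

lemma classify (l m n : ℕ → ℕ) (hl : ∀ i, 2 ≤ l i) (hm : ∀ i, 2 ≤ m i) (hn : ∀ i, l i + 2 ≤ n i)
    (h : ℕ) (V w : List Bool)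
    (h0 : w ++ [false] <:+: subw l m n h V) (h1 : w ++ [true] <:+: subw l m n h V) :
    w <:+ List.replicate (m h - 1) false ∨ w <:+ List.replicate (n h - 1) true ∨
    ∃ v, v ++ [false] <:+: V ∧ v ++ [true] <:+: V ∧ w <:+ hatw l m n h v := by
  obtain ⟨s, t, h0⟩ := h0
  obtain ⟨s', t', h1⟩ := h1
  have hmh := hm h
  have hnh := hn h
  rcases subw_parse l m n h V (P := s ++ w) (c := false) (t := t) (by simpa using h0) with
    ⟨-, y, x, z, j, hV, hj, hP⟩ | ⟨hc, -⟩
  swap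
  · simp at hc
  rcases subw_parse l m n h V (P := s' ++ w) (c := true) (t := t') (by simpa using h1) with
    ⟨hc, -⟩ | ⟨-, y', x', z', j', hV', hj', hP'⟩
  · simp at hc
  have hw : w <:+ subw l m n h y ++ List.replicate j false := ⟨s, hP⟩
  have hw' : w <:+ subw l m n h y' ++ List.replicate (m h) false ++ List.replicate j' true :=
    ⟨s', hP'⟩
  have hx'n : j' < n h := by
    cases x' <;> simp at hj' <;> omega
  rcases Nat.eq_zero_or_pos j with rfl | hjpos
  · -- the word is followed by the start of a block
    simp only [List.replicate_zero, List.append_nil] at hw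
    rcases List.eq_nil_or_concat y with rfl | ⟨y1, x1, rfl⟩
    · left
      simp [subw_nil] at hw
      simp [hw]
    simp only [List.concat_eq_append] at hw hV
    rw [subw_append, subw_single] at hw
    unfold blk at hw
    rw [← List.append_assoc] at hw
    have e1 : ∀ (Y : List Bool) (k : ℕ), Y ++ List.replicate (m h) false ++ List.replicate k true
        = (Y ++ List.replicate (m h - 0 - 1) false) ++ false :: List.replicate k true := by
      intro Y k
      rw [rep_split (k := m h) (j := 0) false (by omega)]
      simp
    have e2 : ∀ (Y : List Bool) (k k' : ℕ), k' < k → Y ++ List.replicate k true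
        = (Y ++ List.replicate (k - k' - 1) true) ++ true :: List.replicate k' true := by
      intro Y k k' hk
      rw [rep_split (k := k) (j := k') true hk]
      simp
    generalize hk1 : (if x1 = true then n h else l h) = k1 at hw
    rcases lt_trichotomy k1 j' with hlt | heq | hgt
    · right; left
      rw [e1] at hw
      rw [e2 _ _ _ hlt] at hw'
      refine (suffix_diff (by simp) hw hw').trans ?_
      rw [rep_split_le (k := n h - 1) (j := k1) true (by omega)]
      exact List.suffix_append _ _
    · right; right
      have hx : x' = true ∧ x1 = false := by
        cases x' <;> cases x1 <;> simp at hk1 hj' ⊢ <;> omega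
      obtain ⟨rfl, rfl⟩ := hx
      simp at hk1
      subst heq
      subst hk1
      have f1 : y1 ++ [false] <:+: V := ⟨[], x :: z, by simp [hV]⟩
      have f2 : y' ++ [true] <:+: V := ⟨[], z', by simp [hV']⟩
      have shrink : ∀ (a v : List Bool) (c : Bool), a ++ v ++ [c] <:+: V → v ++ [c] <:+: V := by
        rintro a v c ⟨p, q, hpq⟩
        exact ⟨p ++ a, q, by simpa using hpq⟩
      rcases common_suffix y1 y' with ⟨a, rfl⟩ | ⟨a, rfl⟩ | ⟨p, q, v, c, d, hcd, rfl, rfl⟩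
      · refine ⟨y1, f1, shrink _ _ _ f2, hw.trans ?_⟩
        exact ⟨List.replicate (l h) true, by simp [hatw]⟩
      · refine ⟨y', shrink _ _ _ f1, f2, hw'.trans ?_⟩
        exact ⟨List.replicate (l h) true, by simp [hatw]⟩
      · refine ⟨v, shrink (p ++ [c]) _ _ (by simpa using f1),
          shrink (q ++ [d]) _ _ (by simpa using f2), ?_⟩
        obtain ⟨r, hr⟩ := blk_suffix_cons l m n hm hn h c
        obtain ⟨r', hr'⟩ := blk_suffix_cons l m n hm hn h d
        refine suffix_diff (p := subw l m n h p ++ r) (q := subw l m n h q ++ r') hcd ?_ ?_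
        · simpa [hatw, subw_append, subw_cons, hr] using hw
        · simpa [hatw, subw_append, subw_cons, hr'] using hw'
    · right; left
      rw [e1] at hw'
      rw [e2 _ _ _ hgt] at hw
      refine (suffix_diff (by simp) hw hw').trans ?_
      rw [rep_split_le (k := n h - 1) (j := j') true (by omega)]
      exact List.suffix_append _ _
  · left
    rcases Nat.eq_zero_or_pos j' with rfl | hjpos'
    · have : w <:+ List.replicate j false := by
        rcases List.eq_nil_or_concat y with rfl | ⟨y1, x1, rfl⟩
        · simpa [subw_nil] using hw
        · simp only [List.concat_eq_append] at hw
          rw [subw_append, subw_single] at hw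
          simp only [List.replicate_zero, List.append_nil] at hw'
          rw [rep_split (k := m h) (j := j) false hj, ← List.append_assoc] at hw'
          have hk : blk l m n h x1 = (List.replicate (m h) false ++
              List.replicate ((if x1 then n h else l h) - 0 - 1) true) ++ [true] := by
            unfold blk
            rw [rep_split (k := (if x1 then n h else l h)) (j := 0) true
                (by have := hl h; cases x1 <;> simp <;> omega)]
            simp
          rw [hk, ← List.append_assoc, List.append_assoc] at hw
          exact suffix_diff (a := true) (b := false) (by simp) hw hw'
      refine this.trans ?_
      rw [rep_split_le (k := m h - 1) (j := j) false (by omega)]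
      exact List.suffix_append _ _
    · rw [rep_split (k := j) (j := 0) false hjpos, ← List.append_assoc] at hw
      rw [rep_split (k := j') (j := 0) true hjpos', ← List.append_assoc] at hw'
      have := suffix_diff (by simp) hw hw'
      simp at this
      simp [this]

/-! ### The words `wordIter` and their factors -/

lemma wordIter_step (l m n : ℕ → ℕ) (hm : ∀ i, 2 ≤ m i) (i h : ℕ) :
    ∃ t, t ≠ [] ∧ wordIter l m n (i + 1) h = wordIter l m n i h ++ t := by
  induction i generalizing h with
  | zero =>
    refine ⟨List.replicate (m h - 1) false ++ List.replicate (l h) true, ?_, ?_⟩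
    · have := hm h
      intro hc
      have := congrArg List.length hc
      simp at this
      omega
    · simp only [wordIter, subw_single, blk]
      rw [rep_cons (k := m h) false (by have := hm h; omega)]
      simp
  | succ i ih =>
    obtain ⟨t, ht, e⟩ := ih (h + 1)
    refine ⟨subw l m n h t, ?_, ?_⟩
    · rcases t with _ | ⟨c, t⟩
      · exact absurd rfl ht
      · rw [subw_cons]
        intro hc
        have := congrArg List.length hc
        have := hm h
        simp [blk] at *
        omega
    · have e1 : wordIter l m n (i + 1 + 1) h = subw l m n h (wordIter l m n (i + 1) (h + 1)) := rfl
      have e2 : wordIter l m n (i + 1) h = subw l m n h (wordIter l m n i (h + 1)) := rfl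
      rw [e1, e2, ← subw_append, ← e]

lemma wordIter_le (l m n : ℕ → ℕ) (hm : ∀ i, 2 ≤ m i) (h : ℕ) {i j : ℕ} (hij : i ≤ j) :
    wordIter l m n i h <+: wordIter l m n j h := by
  induction hij with
  | refl => exact List.prefix_refl _
  | step _ ih =>
    obtain ⟨t, -, e⟩ := wordIter_step l m n hm _ h
    rw [e]
    exact ih.trans (List.prefix_append _ _)

lemma wordIter_length (l m n : ℕ → ℕ) (hm : ∀ i, 2 ≤ m i) (h i : ℕ) :
    i < (wordIter l m n i h).length := by
  induction i with
  | zero => simp [wordIter]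
  | succ i ih =>
    obtain ⟨t, ht, e⟩ := wordIter_step l m n hm i h
    rw [e, List.length_append]
    have := List.length_pos_of_ne_nil ht
    omega

/-- `w` is a factor of one of the finite words converging to the infinite word. -/
def Fac (l m n : ℕ → ℕ) (h : ℕ) (w : List Bool) : Prop := ∃ i, w <:+: wordIter l m n i h

lemma limWord_get (l m n : ℕ → ℕ) (hm : ∀ i, 2 ≤ m i) (h i k : ℕ)
    (hk : k < (wordIter l m n i h).length) :
    limWord l m n h k = (wordIter l m n i h)[k] := by
  have hk' : k < (wordIter l m n (k + 1) h).length :=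
    lt_trans (Nat.lt_succ_self k) (wordIter_length l m n hm h (k + 1))
  unfold limWord
  rw [List.getD_eq_getElem _ _ hk']
  rcases le_total i (k + 1) with hle | hle
  · exact ((wordIter_le l m n hm h hle).getElem hk).symm
  · exact (wordIter_le l m n hm h hle).getElem hk'

lemma isFactor_iff (l m n : ℕ → ℕ) (hm : ∀ i, 2 ≤ m i) (h : ℕ) (w : List Bool) :
    IsFactor (limWord l m n h) w ↔ Fac l m n h w := by
  constructor
  · rintro ⟨k, hk⟩
    refine ⟨k + w.length, ?_⟩
    have hlen := wordIter_length l m n hm h (k + w.length)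
    have : w = ((wordIter l m n (k + w.length) h).drop k).take w.length := by
      apply List.ext_getElem
      · simp; omega
      · intro j h1 h2
        have e : w[j] = ((List.range w.length).map fun j => limWord l m n h (k + j))[j]'(by simpa using h1) := by
          congr 1
        rw [e]
        simp only [List.getElem_map, List.getElem_range, List.getElem_take, List.getElem_drop]
        exact limWord_get l m n hm h _ _ _
    have key : ((wordIter l m n (k + w.length) h).drop k).take w.length <:+:
        wordIter l m n (k + w.length) h :=
      (List.take_prefix _ _).isInfix.trans (List.drop_suffix _ _).isInfix
    rwa [← this] at key
  · rintro ⟨i, s, t, e⟩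
    refine ⟨s.length, ?_⟩
    apply List.ext_getElem
    · simp
    · intro j h1 h2
      simp only [List.getElem_map, List.getElem_range]
      have hl : s.length + j < (wordIter l m n i h).length := by
        rw [← e]; simp; omega
      rw [limWord_get l m n hm h i _ hl]
      simp only [← e]
      rw [List.getElem_append_left (by simp; omega), List.getElem_append_right (by omega)]
      simp

lemma Fac.mono {l m n : ℕ → ℕ} {h : ℕ} {v w : List Bool} (hw : Fac l m n h w) (hv : v <:+: w) :
    Fac l m n h v := by
  obtain ⟨i, hi⟩ := hw
  exact ⟨i, hv.trans hi⟩

lemma Fac.ext {l m n : ℕ → ℕ} (hm : ∀ i, 2 ≤ m i) {h : ℕ} {w : List Bool} (hw : Fac l m n h w) :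
    ∃ y, Fac l m n h (w ++ [y]) := by
  obtain ⟨i, s, t, e⟩ := hw
  obtain ⟨t', ht', e'⟩ := wordIter_step l m n hm i h
  rcases t' with _ | ⟨c, t'⟩
  · exact absurd rfl ht'
  rcases t with _ | ⟨d, t⟩
  · exact ⟨c, i + 1, s, t', by rw [e', ← e]; simp⟩
  · exact ⟨d, i, s, t, by rw [← e]; simp⟩

lemma Fac.sub {l m n : ℕ → ℕ} {h : ℕ} {w : List Bool} (hw : Fac l m n (h + 1) w) :
    Fac l m n h (subw l m n h w) := by
  obtain ⟨i, hi⟩ := hw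
  exact ⟨i + 1, subw_mono l m n h hi⟩

/-- Right special words. -/
def RS (l m n : ℕ → ℕ) (h : ℕ) (w : List Bool) : Prop :=
  Fac l m n h (w ++ [false]) ∧ Fac l m n h (w ++ [true])

/-- Right special words with left neighbours. -/
def LRS (l m n : ℕ → ℕ) (h : ℕ) (w : List Bool) : Prop :=
  (∃ x, Fac l m n h (x :: (w ++ [false]))) ∧ ∃ x, Fac l m n h (x :: (w ++ [true]))

lemma LRS.rs {l m n : ℕ → ℕ} {h : ℕ} {w : List Bool} (hw : LRS l m n h w) : RS l m n h w := by
  obtain ⟨⟨x, hx⟩, ⟨y, hy⟩⟩ := hw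
  exact ⟨hx.mono (List.suffix_cons _ _).isInfix, hy.mono (List.suffix_cons _ _).isInfix⟩

lemma RS.suffix {l m n : ℕ → ℕ} {h : ℕ} {v w : List Bool} (hw : RS l m n h w) (hv : v <:+ w) :
    RS l m n h v := by
  obtain ⟨t, rfl⟩ := hv
  exact ⟨hw.1.mono ⟨t, [], by simp⟩, hw.2.mono ⟨t, [], by simp⟩⟩

lemma rs_classify_aux (l m n : ℕ → ℕ) (hl : ∀ i, 2 ≤ l i) (hm : ∀ i, 2 ≤ m i)
    (hn : ∀ i, l i + 2 ≤ n i) (i h : ℕ) (w : List Bool)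
    (h0 : w ++ [false] <:+: wordIter l m n i h) (h1 : w ++ [true] <:+: wordIter l m n i h) :
    ∃ j, w <:+ hatComp l m n j h (List.replicate (m (h + j) - 1) false) ∨
      w <:+ hatComp l m n j h (List.replicate (n (h + j) - 1) true) := by
  induction i generalizing h w with
  | zero =>
    have : true ∈ wordIter l m n 0 h := h1.subset (by simp)
    simp [wordIter] at this
  | succ i ih =>
    rcases classify l m n hl hm hn h _ w h0 h1 with hw | hw | ⟨v, hv0, hv1, hw⟩
    · exact ⟨0, Or.inl hw⟩
    · exact ⟨0, Or.inr hw⟩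
    · obtain ⟨j, hj⟩ := ih (h + 1) v hv0 hv1
      have e : h + 1 + j = h + (j + 1) := by omega
      rw [e] at hj
      refine ⟨j + 1, ?_⟩
      rcases hj with hj | hj
      · left; exact hw.trans (hat_suffix l m n hm hn h hj)
      · right; exact hw.trans (hat_suffix l m n hm hn h hj)

/-- The maximal right special words. -/
def Xw (l m n : ℕ → ℕ) (i : ℕ) : List Bool := hatComp l m n i 0 (List.replicate (m i - 1) false)
/-- The maximal right special words. -/
def Yw (l m n : ℕ → ℕ) (i : ℕ) : List Bool := hatComp l m n i 0 (List.replicate (n i - 1) true)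
/-- Strong bispecial words. -/
def Ew (l m n : ℕ → ℕ) (i : ℕ) : List Bool := hatComp l m n i 0 []
/-- Strong bispecial words. -/
def Aw (l m n : ℕ → ℕ) (i : ℕ) : List Bool := hatComp l m n i 0 (List.replicate (l i) true)

lemma rs_classify (l m n : ℕ → ℕ) (hl : ∀ i, 2 ≤ l i) (hm : ∀ i, 2 ≤ m i)
    (hn : ∀ i, l i + 2 ≤ n i) (w : List Bool) (hw : RS l m n 0 w) :
    ∃ j, w <:+ Xw l m n j ∨ w <:+ Yw l m n j := by
  obtain ⟨⟨i, hi⟩, ⟨j, hj⟩⟩ := hw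
  have := rs_classify_aux l m n hl hm hn (max i j) 0 w
    (hi.trans (wordIter_le l m n hm 0 (le_max_left i j)).isInfix)
    (hj.trans (wordIter_le l m n hm 0 (le_max_right i j)).isInfix)
  simpa [Xw, Yw] using this

/-! ### The maximal words are right special -/

lemma LRS.hat {l m n : ℕ → ℕ} (hm : ∀ i, 2 ≤ m i) (hn : ∀ i, l i + 2 ≤ n i) {h : ℕ}
    {v : List Bool} (hv : LRS l m n (h + 1) v) : LRS l m n h (hatw l m n h v) := by
  obtain ⟨⟨x, hx⟩, ⟨y, hy⟩⟩ := hv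
  have hmh := hm h
  have hnh := hn h
  constructor
  · obtain ⟨r, hr⟩ := blk_suffix_cons l m n hm hn h x
    obtain ⟨z, hz⟩ := hx.ext hm
    refine ⟨x, hz.sub.mono ⟨r, List.replicate (m h - 1) false ++
      List.replicate (if z then n h else l h) true, ?_⟩⟩
    have e1 : blk l m n h z = false :: (List.replicate (m h - 1) false ++
      List.replicate (if z then n h else l h) true) := by
      unfold blk
      rw [rep_cons (k := m h) false (by omega)]
      simp
    have e2 : blk l m n h false = List.replicate (m h) false ++ List.replicate (l h) true := by
      simp [blk]
    simp [hatw, subw_append, subw_cons, subw_nil, hr, e1, e2]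
  · obtain ⟨r, hr⟩ := blk_suffix_cons l m n hm hn h y
    refine ⟨y, hy.sub.mono ⟨r, List.replicate (n h - l h - 1) true, ?_⟩⟩
    have e2 : blk l m n h true = List.replicate (m h) false ++ (List.replicate (l h) true ++
        true :: List.replicate (n h - l h - 1) true) := by
      have : n h = l h + (n h - l h - 1 + 1) := by omega
      rw [← List.replicate_succ, List.replicate_append_replicate, ← this]
      simp [blk]
    simp [hatw, subw_append, subw_cons, subw_nil, hr, e2]

lemma LRS.hatComp {l m n : ℕ → ℕ} (hm : ∀ i, 2 ≤ m i) (hn : ∀ i, l i + 2 ≤ n i) {i h : ℕ}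
    {v : List Bool} (hv : LRS l m n (h + i) v) : LRS l m n h (hatComp l m n i h v) := by
  induction i generalizing h with
  | zero => exact hv
  | succ i ih =>
    refine LRS.hat hm hn (ih ?_)
    have e : h + 1 + i = h + (i + 1) := by omega
    rw [e]; exact hv

lemma fac_two (l m n : ℕ → ℕ) (hl : ∀ i, 2 ≤ l i) (hm : ∀ i, 2 ≤ m i) (h : ℕ) (c : Bool) :
    Fac l m n h [c, c] := by
  have hlh := hl h
  have hmh := hm h
  refine ⟨1, ?_⟩
  simp only [wordIter, subw_single, blk]
  cases c
  · refine ⟨[], List.replicate (m h - 1 - 1) false ++ List.replicate (l h) true, ?_⟩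
    rw [rep_cons (k := m h) false (by omega), rep_cons (k := m h - 1) false (by omega)]
    simp
  · refine ⟨List.replicate (m h) false ++ List.replicate (l h - 1 - 1) true, [], ?_⟩
    simp only [Bool.false_eq_true, if_false]
    rw [rep_split (k := l h) (j := 1) true (by omega)]
    simp

lemma lrs_zero (l m n : ℕ → ℕ) (hl : ∀ i, 2 ≤ l i) (hm : ∀ i, 2 ≤ m i) (h : ℕ) :
    LRS l m n h (List.replicate (m h - 1) false) := by
  have hlh := hl h
  have hmh := hm h
  have F := (fac_two l m n hl hm (h + 1) false).sub
  have e : subw l m n h [false, false] = List.replicate (m h) false ++ List.replicate (l h) true ++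
      (List.replicate (m h) false ++ List.replicate (l h) true) := by
    simp [subw_cons, subw_nil, blk]
  rw [e] at F
  have em : List.replicate (m h) false = List.replicate (m h - 1) false ++ [false] := by
    rw [← List.replicate_succ']; congr 1; omega
  have em' := rep_cons (k := m h) false (by omega)
  have el := rep_cons (k := l h) true (by omega)
  have el' : List.replicate (l h) true = List.replicate (l h - 1) true ++ [true] := by
    rw [← List.replicate_succ']; congr 1; omega
  constructor
  · refine ⟨true, F.mono ⟨List.replicate (m h) false ++ List.replicate (l h - 1) true,
      List.replicate (l h) true, ?_⟩⟩
    conv_rhs => rw [el', em]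
    rw [← el', em]
    simp [el']
  · refine ⟨false, F.mono ⟨[], List.replicate (l h - 1) true ++
      (List.replicate (m h) false ++ List.replicate (l h) true), ?_⟩⟩
    conv_rhs => rw [el, em']
    rw [← el, ← em']
    simp [em', el]

lemma lrs_one (l m n : ℕ → ℕ) (hl : ∀ i, 2 ≤ l i) (hm : ∀ i, 2 ≤ m i)
    (hn : ∀ i, l i + 2 ≤ n i) (h : ℕ) :
    LRS l m n h (List.replicate (n h - 1) true) := by
  have hnh := hn h
  have hmh := hm h
  have F := (fac_two l m n hl hm (h + 1) true).sub
  have e : subw l m n h [true, true] = List.replicate (m h) false ++ List.replicate (n h) true ++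
      (List.replicate (m h) false ++ List.replicate (n h) true) := by
    simp [subw_cons, subw_nil, blk]
  rw [e] at F
  have em : List.replicate (m h) false = List.replicate (m h - 1) false ++ [false] := by
    rw [← List.replicate_succ']; congr 1; omega
  have em' := rep_cons (k := m h) false (by omega)
  have el := rep_cons (k := n h) true (by omega)
  have el' : List.replicate (n h) true = List.replicate (n h - 1) true ++ [true] := by
    rw [← List.replicate_succ']; congr 1; omega
  constructor
  · refine ⟨true, F.mono ⟨List.replicate (m h) false, List.replicate (m h - 1) false ++
      List.replicate (n h) true, ?_⟩⟩
    have : true :: (List.replicate (n h - 1) true ++ [false]) = List.replicate (n h) true ++ [false] := by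
      rw [el]; simp
    rw [this]
    have : List.replicate (m h) false ++ List.replicate (n h) true =
      false :: (List.replicate (m h - 1) false ++ List.replicate (n h) true) := by
      rw [em']; simp
    rw [this]
    simp [em']
  · refine ⟨false, F.mono ⟨List.replicate (m h - 1) false,
      (List.replicate (m h) false ++ List.replicate (n h) true), ?_⟩⟩
    rw [← el']
    have : List.replicate (m h) false ++ List.replicate (n h) true =
      List.replicate (m h - 1) false ++ false :: List.replicate (n h) true := by
      rw [em]; simp
    conv_rhs => rw [this]
    simp [this]

lemma rs_X (l m n : ℕ → ℕ) (hl : ∀ i, 2 ≤ l i) (hm : ∀ i, 2 ≤ m i)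
    (hn : ∀ i, l i + 2 ≤ n i) (i : ℕ) : RS l m n 0 (Xw l m n i) := by
  have := lrs_zero l m n hl hm i
  exact (LRS.hatComp hm hn (i := i) (h := 0) (by simpa using this)).rs

lemma rs_Y (l m n : ℕ → ℕ) (hl : ∀ i, 2 ≤ l i) (hm : ∀ i, 2 ≤ m i)
    (hn : ∀ i, l i + 2 ≤ n i) (i : ℕ) : RS l m n 0 (Yw l m n i) := by
  have := lrs_one l m n hl hm hn i
  exact (LRS.hatComp hm hn (i := i) (h := 0) (by simpa using this)).rs

/-! ### Counting -/

/-- The set of right special words of a given length. -/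
def RSset (l m n : ℕ → ℕ) (N : ℕ) : Set (List Bool) := {w | w.length = N ∧ RS l m n 0 w}

lemma complexity_succ (l m n : ℕ → ℕ) (hm : ∀ i, 2 ≤ m i) (N : ℕ) :
    complexityFn (limWord l m n 0) (N + 1) =
      complexityFn (limWord l m n 0) N + (RSset l m n N).ncard := by
  have hfin : ∀ P : List Bool → Prop, {w : List Bool | w.length = N ∧ P w}.Finite := fun P =>
    (List.finite_length_eq Bool N).subset (fun w hw => hw.1)
  let A : Bool → Set (List Bool) := fun c => {w | w.length = N ∧ Fac l m n 0 (w ++ [c])}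
  have hinj : ∀ c : Bool, Function.Injective (fun w : List Bool => w ++ [c]) := fun c a b hab => by
    simpa using hab
  have e1 : {w : List Bool | w.length = N + 1 ∧ IsFactor (limWord l m n 0) w} =
      Set.image (fun w => w ++ [false]) (A false) ∪ Set.image (fun w => w ++ [true]) (A true) := by
    ext w
    simp only [isFactor_iff l m n hm, Set.mem_ofPred_eq, Set.mem_union, Set.mem_image, A]
    constructor
    · rintro ⟨hlen, hw⟩
      rcases List.eq_nil_or_concat w with rfl | ⟨v, c, rfl⟩
      · simp at hlen
      · simp only [List.concat_eq_append] at hlen hw ⊢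
        simp at hlen
        cases c
        · left; exact ⟨v, ⟨hlen, hw⟩, rfl⟩
        · right; exact ⟨v, ⟨hlen, hw⟩, rfl⟩
    · rintro (⟨v, ⟨hlen, hv⟩, rfl⟩ | ⟨v, ⟨hlen, hv⟩, rfl⟩) <;> exact ⟨by simp [hlen], hv⟩
  have e2 : {w : List Bool | w.length = N ∧ IsFactor (limWord l m n 0) w} =
      A false ∪ A true := by
    ext w
    simp only [isFactor_iff l m n hm, Set.mem_ofPred_eq, Set.mem_union, A]
    constructor
    · rintro ⟨hlen, hw⟩
      obtain ⟨c, hc⟩ := hw.ext hm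
      cases c
      · left; exact ⟨hlen, hc⟩
      · right; exact ⟨hlen, hc⟩
    · rintro (⟨hlen, hv⟩ | ⟨hlen, hv⟩) <;> exact ⟨hlen, hv.mono (List.prefix_append _ _).isInfix⟩
  have e3 : RSset l m n N = A false ∩ A true := by
    ext w
    simp only [RSset, RS, Set.mem_ofPred_eq, Set.mem_inter_iff, A]
    tauto
  have hd : Disjoint (Set.image (fun w => w ++ [false]) (A false)) (Set.image (fun w => w ++ [true]) (A true)) := by
    rw [Set.disjoint_left]
    rintro w ⟨a, -, rfl⟩ ⟨b, -, hb⟩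
    have := congrArg List.getLast? hb
    simp at this
  unfold complexityFn
  rw [e1, e2, e3, Set.ncard_union_add_ncard_inter _ _ (hfin _) (hfin _),
    Set.ncard_union_eq hd ((hfin _).image _) ((hfin _).image _),
    Set.ncard_image_of_injective _ (hinj _), Set.ncard_image_of_injective _ (hinj _)]

lemma complexity_zero (l m n : ℕ → ℕ) : complexityFn (limWord l m n 0) 0 = 1 := by
  unfold complexityFn
  have : {w : List Bool | w.length = 0 ∧ IsFactor (limWord l m n 0) w} = {[]} := by
    ext w
    simp only [Set.mem_ofPred_eq, Set.mem_singleton_iff, List.length_eq_zero_iff]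
    constructor
    · exact fun h => h.1
    · rintro rfl; exact ⟨rfl, 0, by simp⟩
  rw [this, Set.ncard_singleton]

/-- The suffix of length `N`. -/
def suf (N : ℕ) (Z : List Bool) : List Bool := Z.drop (Z.length - N)

lemma eq_suf {N : ℕ} {w Z : List Bool} (h : w <:+ Z) (hN : w.length = N) : w = suf N Z := by
  unfold suf; rw [← hN]; exact List.suffix_iff_eq_drop.1 h

lemma suf_suffix (N : ℕ) (Z : List Bool) : suf N Z <:+ Z := List.drop_suffix _ _

lemma suf_length {N : ℕ} {Z : List Bool} (h : N ≤ Z.length) : (suf N Z).length = N := by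
  simp [suf]; omega

lemma suf_eq {N : ℕ} {T Z : List Bool} (h : T <:+ Z) (hN : N ≤ T.length) : suf N Z = suf N T :=
  (eq_suf ((suf_suffix N T).trans h) (suf_length hN)).symm

lemma suf_ne {N : ℕ} {T Z Z' : List Bool} {c d : Bool} (hcd : c ≠ d) (h : c :: T <:+ Z)
    (h' : d :: T <:+ Z') (hN : T.length < N) (hZ : N ≤ Z.length) (hZ' : N ≤ Z'.length) :
    suf N Z ≠ suf N Z' := by
  intro he
  have h1 : c :: T <:+ suf N Z := List.suffix_of_suffix_length_le h (suf_suffix _ _)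
    (by rw [suf_length hZ]; simpa using hN)
  have h2 : d :: T <:+ suf N Z' := List.suffix_of_suffix_length_le h' (suf_suffix _ _)
    (by rw [suf_length hZ']; simpa using hN)
  rw [he] at h1
  have := (List.suffix_of_suffix_length_le h1 h2 (by simp)).eq_of_length (by simp)
  simp at this
  exact hcd this

section suffixes
variable (l m n : ℕ → ℕ) (hl : ∀ i, 2 ≤ l i) (hm : ∀ i, 2 ≤ m i) (hn : ∀ i, l i + 2 ≤ n i)

lemma Ew_Aw (hm : ∀ i, 2 ≤ m i) (hn : ∀ i, l i + 2 ≤ n i) (i : ℕ) :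
    Ew l m n i <:+ Aw l m n i := hatComp_suffix l m n hm hn i 0 (List.nil_suffix)

lemma Aw_Yw (hm : ∀ i, 2 ≤ m i) (hn : ∀ i, l i + 2 ≤ n i) (i : ℕ) :
    true :: Aw l m n i <:+ Yw l m n i := by
  refine (hatComp_cons l m n hm hn i 0 true _).trans (hatComp_suffix l m n hm hn i 0 ?_)
  have := hn i
  rw [rep_split (k := n i - 1) (j := l i) true (by omega)]
  exact List.suffix_append _ _

lemma Ew_Xw (hm : ∀ i, 2 ≤ m i) (hn : ∀ i, l i + 2 ≤ n i) (i : ℕ) :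
    false :: Ew l m n i <:+ Xw l m n i := by
  refine (hatComp_cons l m n hm hn i 0 false _).trans (hatComp_suffix l m n hm hn i 0 ?_)
  have := hm i
  rw [rep_split (k := m i - 1) (j := 0) false (by omega)]
  exact List.suffix_append _ _

lemma Ew_Yw (hm : ∀ i, 2 ≤ m i) (hn : ∀ i, l i + 2 ≤ n i) (i : ℕ) :
    true :: Ew l m n i <:+ Yw l m n i := by
  refine (hatComp_cons l m n hm hn i 0 true _).trans (hatComp_suffix l m n hm hn i 0 ?_)
  have := hn i
  rw [rep_split (k := n i - 1) (j := 0) true (by omega)]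
  exact List.suffix_append _ _

lemma Aw_succ (hm : ∀ i, 2 ≤ m i) (hn : ∀ i, l i + 2 ≤ n i) (i : ℕ) (v : List Bool) :
    false :: Aw l m n i <:+ hatComp l m n (i + 1) 0 v := by
  rw [hatComp_succ]
  refine (hatComp_cons l m n hm hn i 0 false _).trans (hatComp_suffix l m n hm hn i 0 ?_)
  have := hm i
  simp only [hatw, zero_add]
  rw [rep_split (k := m i) (j := 0) false (by omega)]
  exact ⟨List.replicate (l i) true ++ subw l m n i v ++ List.replicate (m i - 0 - 1) false,
    by simp⟩

lemma Aw_Ew (hm : ∀ i, 2 ≤ m i) (hn : ∀ i, l i + 2 ≤ n i) (i : ℕ) :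
    Aw l m n i <:+ Ew l m n (i + 1) := (List.suffix_cons _ _).trans (Aw_succ l m n hm hn i [])

lemma Aw_mono (hm : ∀ i, 2 ≤ m i) (hn : ∀ i, l i + 2 ≤ n i) {i j : ℕ} (hij : i ≤ j) :
    Aw l m n i <:+ Aw l m n j := by
  induction hij with
  | refl => exact List.suffix_refl _
  | step _ ih => exact ih.trans ((Aw_Ew l m n hm hn _).trans (Ew_Aw l m n hm hn _))

lemma Aw_Yw' (hm : ∀ i, 2 ≤ m i) (hn : ∀ i, l i + 2 ≤ n i) {i j : ℕ} (hij : i ≤ j) :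
    Aw l m n i <:+ Yw l m n j :=
  (Aw_mono l m n hm hn hij).trans ((List.suffix_cons _ _).trans (Aw_Yw l m n hm hn j))

lemma Aw_Xw' (hm : ∀ i, 2 ≤ m i) (hn : ∀ i, l i + 2 ≤ n i) {i j : ℕ} (hij : i < j) :
    Aw l m n i <:+ Xw l m n j := by
  obtain ⟨k, rfl⟩ : ∃ k, j = k + 1 := ⟨j - 1, by omega⟩
  exact (Aw_mono l m n hm hn (Nat.le_of_lt_succ hij)).trans
    ((List.suffix_cons _ _).trans (Aw_succ l m n hm hn k _))

end suffixes

/-! ### The length sequences -/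

/-- Lengths of `u_i` and `v_i`. -/
def UV (l m n : ℕ → ℕ) : ℕ → ℕ × ℕ
  | 0 => (1, 1)
  | i + 1 => (m i * (UV l m n i).1 + l i * (UV l m n i).2,
      m i * (UV l m n i).1 + n i * (UV l m n i).2)

/-- Length of `Ew`. -/
def eL (l m n : ℕ → ℕ) : ℕ → ℕ
  | 0 => 0
  | i + 1 => eL l m n i + m i * (UV l m n i).1 + 2 * (l i * (UV l m n i).2)

lemma count_subw (l m n : ℕ → ℕ) (h : ℕ) (w : List Bool) :
    (subw l m n h w).count false = m h * (w.count false + w.count true) ∧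
    (subw l m n h w).count true = l h * w.count false + n h * w.count true := by
  induction w with
  | nil => simp [subw_nil]
  | cons c w ih =>
    rw [subw_cons, List.count_append, List.count_append, ih.1, ih.2]
    cases c <;> simp [blk, List.count_replicate, -List.count_false_add_count_true] <;> constructor <;> ring

lemma length_count (w : List Bool) : w.length = w.count false + w.count true :=
  (List.count_false_add_count_true w).symm

lemma length_hatComp (l m n : ℕ → ℕ) (i : ℕ) (w : List Bool) :
    (hatComp l m n i 0 w).length =
      eL l m n i + w.count false * (UV l m n i).1 + w.count true * (UV l m n i).2 := by
  induction i generalizing w with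
  | zero => simp [hatComp, eL, UV]
  | succ i ih =>
    rw [hatComp_succ, ih]
    simp only [hatw, zero_add, List.count_append, count_subw, List.count_replicate, eL, UV]
    simp [-List.count_false_add_count_true]
    ring

lemma length_subComp (l m n : ℕ → ℕ) (i : ℕ) (w : List Bool) :
    (subComp l m n i 0 w).length =
      w.count false * (UV l m n i).1 + w.count true * (UV l m n i).2 := by
  induction i generalizing w with
  | zero => simp [subComp, UV]
  | succ i ih =>
    rw [subComp_succ, ih]
    simp only [zero_add, count_subw, UV]
    ring

/-- Numbers of zeros in `u_i` and `v_i`. -/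
def PQ (l m n : ℕ → ℕ) : ℕ → ℕ × ℕ
  | 0 => (1, 0)
  | i + 1 => (m i * (PQ l m n i).1 + l i * (PQ l m n i).2,
      m i * (PQ l m n i).1 + n i * (PQ l m n i).2)

lemma count_subComp (l m n : ℕ → ℕ) (i : ℕ) (w : List Bool) :
    (subComp l m n i 0 w).count false =
      w.count false * (PQ l m n i).1 + w.count true * (PQ l m n i).2 := by
  induction i generalizing w with
  | zero => simp [subComp, PQ]
  | succ i ih =>
    rw [subComp_succ, ih]
    simp only [zero_add, count_subw, PQ]
    ring

lemma len_E (l m n : ℕ → ℕ) (i : ℕ) : (Ew l m n i).length = eL l m n i := by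
  simp [Ew, length_hatComp]
lemma len_A (l m n : ℕ → ℕ) (i : ℕ) :
    (Aw l m n i).length = eL l m n i + l i * (UV l m n i).2 := by
  simp [Aw, length_hatComp, List.count_replicate]
lemma len_X (l m n : ℕ → ℕ) (i : ℕ) :
    (Xw l m n i).length = eL l m n i + (m i - 1) * (UV l m n i).1 := by
  simp [Xw, length_hatComp, List.count_replicate]
lemma len_Y (l m n : ℕ → ℕ) (i : ℕ) :
    (Yw l m n i).length = eL l m n i + (n i - 1) * (UV l m n i).2 := by
  simp [Yw, length_hatComp, List.count_replicate]

/-! ### Number of right special words -/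

/-- The ordering of the lengths of the bispecial words. -/
structure LenOrder (l m n : ℕ → ℕ) : Prop where
  xy : ∀ i, (Xw l m n i).length ≤ (Yw l m n i).length
  ya : ∀ i, (Yw l m n i).length ≤ (Aw l m n (i + 1)).length
  xe : ∀ i, (Xw l m n i).length ≤ (Ew l m n (i + 1)).length
  ey : ∀ i, (Ew l m n (i + 1)).length ≤ (Yw l m n i).length
  ax : ∀ i, (Aw l m n i).length ≤ (Xw l m n i).length

section counting
variable {l m n : ℕ → ℕ}

lemma find_interval (hm : ∀ i, 2 ≤ m i) (hn : ∀ i, l i + 2 ≤ n i) (N : ℕ) :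
    N ≤ (Aw l m n 0).length ∨
      ∃ i, (Aw l m n i).length < N ∧ N ≤ (Aw l m n (i + 1)).length := by
  have hstep : ∀ i, (Aw l m n i).length < (Aw l m n (i + 1)).length := fun i => by
    have := (Aw_succ l m n hm hn i (List.replicate (l (i + 1)) true)).length_le
    simpa [Aw] using this
  have hex : ∃ i, N ≤ (Aw l m n i).length := ⟨N, (strictMono_nat_of_lt_succ hstep).le_apply⟩
  classical
  rcases h : Nat.find hex with _ | i
  · left; rw [← h]; exact Nat.find_spec hex
  · right
    refine ⟨i, ?_, ?_⟩
    · have := Nat.find_min hex (m := i) (by omega)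
      omega
    · rw [← h]; exact Nat.find_spec hex

lemma ncard_le_three {S : Set (List Bool)} (a b c : List Bool) (h : S ⊆ {a, b, c}) :
    S.ncard ≤ 3 := by
  refine (Set.ncard_le_ncard h (by simp)).trans ?_
  exact Set.ncard_insert_le _ _ |>.trans (by
    have := Set.ncard_insert_le b {c}
    simp at this
    omega)

lemma ncard_le_two {S : Set (List Bool)} (a b : List Bool) (h : S ⊆ {a, b}) :
    S.ncard ≤ 2 := by
  refine (Set.ncard_le_ncard h (by simp)).trans ?_
  have := Set.ncard_insert_le a {b}
  simpa using this

/-- Right special words up to length `|A_i|` coming from level at least `i`. -/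
lemma rs_high (hm : ∀ i, 2 ≤ m i) (hn : ∀ i, l i + 2 ≤ n i) {N i j : ℕ} {w : List Bool}
    (hw : w.length = N) (hN : N ≤ (Aw l m n i).length) (hij : i ≤ j)
    (h : w <:+ Xw l m n j ∨ w <:+ Yw l m n j) :
    w = suf N (Aw l m n i) ∨ w = suf N (Xw l m n i) := by
  rcases h with h | h
  · rcases hij.eq_or_lt with rfl | hlt
    · right; exact eq_suf h hw
    · left; rw [eq_suf h hw, suf_eq (Aw_Xw' l m n hm hn hlt) hN]
  · left; rw [eq_suf h hw, suf_eq (Aw_Yw' l m n hm hn hij) hN]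

lemma rs_low (O : LenOrder l m n) (hm : ∀ i, 2 ≤ m i) (hn : ∀ i, l i + 2 ≤ n i)
    {i j : ℕ} {w : List Bool} (hij : j < i)
    (h : w <:+ Xw l m n j ∨ w <:+ Yw l m n j) : w.length ≤ (Aw l m n i).length := by
  have h1 : w.length ≤ (Yw l m n j).length := by
    rcases h with h | h
    · exact h.length_le.trans (O.xy j)
    · exact h.length_le
  exact h1.trans ((O.ya j).trans (Aw_mono l m n hm hn hij).length_le)

lemma rs_le_three (O : LenOrder l m n) (hl : ∀ i, 2 ≤ l i) (hm : ∀ i, 2 ≤ m i)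
    (hn : ∀ i, l i + 2 ≤ n i) (N : ℕ) : (RSset l m n N).ncard ≤ 3 := by
  rcases find_interval hm hn N with hN | ⟨i, hN1, hN2⟩
  · refine le_trans (ncard_le_two (suf N (Aw l m n 0)) (suf N (Xw l m n 0)) ?_) (by omega)
    rintro w ⟨hlen, hw⟩
    obtain ⟨j, hj⟩ := rs_classify l m n hl hm hn w hw
    exact rs_high hm hn hlen hN (Nat.zero_le j) hj
  · by_cases hX : N ≤ (Xw l m n i).length
    · have hE : suf N (Xw l m n (i + 1)) = suf N (Aw l m n (i + 1)) := by
        rw [suf_eq ((List.suffix_cons _ _).trans (Ew_Xw l m n hm hn (i + 1))) (hX.trans (O.xe i)),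
          suf_eq (Ew_Aw l m n hm hn (i + 1)) (hX.trans (O.xe i))]
      refine ncard_le_three (suf N (Aw l m n (i + 1))) (suf N (Xw l m n i)) (suf N (Yw l m n i)) ?_
      rintro w ⟨hlen, hw⟩
      obtain ⟨j, hj⟩ := rs_classify l m n hl hm hn w hw
      rcases lt_trichotomy j i with hji | rfl | hji
      · have := rs_low O hm hn hji hj; omega
      · rcases hj with hj | hj
        · right; left; exact eq_suf hj hlen
        · right; right; exact eq_suf hj hlen
      · left
        rcases rs_high hm hn hlen hN2 hji hj with h | h
        · exact h
        · rw [h, hE]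
    · refine ncard_le_three (suf N (Aw l m n (i + 1))) (suf N (Xw l m n (i + 1)))
        (suf N (Yw l m n i)) ?_
      rintro w ⟨hlen, hw⟩
      obtain ⟨j, hj⟩ := rs_classify l m n hl hm hn w hw
      rcases lt_trichotomy j i with hji | rfl | hji
      · have := rs_low O hm hn hji hj; omega
      · rcases hj with hj | hj
        · have := hj.length_le; omega
        · right; right; exact eq_suf hj hlen
      · rcases rs_high hm hn hlen hN2 hji hj with h | h
        · left; exact h
        · right; left; exact h

lemma rs_le_two (O : LenOrder l m n) (hl : ∀ i, 2 ≤ l i) (hm : ∀ i, 2 ≤ m i)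
    (hn : ∀ i, l i + 2 ≤ n i) (N i : ℕ) (h1 : (Yw l m n i).length < N)
    (h2 : N ≤ (Aw l m n (i + 1)).length) : (RSset l m n N).ncard ≤ 2 := by
  refine ncard_le_two (suf N (Aw l m n (i + 1))) (suf N (Xw l m n (i + 1))) ?_
  rintro w ⟨hlen, hw⟩
  obtain ⟨j, hj⟩ := rs_classify l m n hl hm hn w hw
  have hxy := O.xy i
  have hax := O.ax i
  rcases lt_trichotomy j i with hji | rfl | hji
  · have := rs_low O hm hn hji hj; omega
  · rcases hj with hj | hj <;> have := hj.length_le <;> omega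
  · exact rs_high hm hn hlen h2 hji hj

lemma two_le_of {N : ℕ} {Z Z' : List Bool} (hZ : RS l m n 0 Z) (hZ' : RS l m n 0 Z')
    (h : N ≤ Z.length) (h' : N ≤ Z'.length) (hne : suf N Z ≠ suf N Z') :
    2 ≤ (RSset l m n N).ncard := by
  rw [← Set.ncard_pair hne]
  refine Set.ncard_le_ncard ?_ ((List.finite_length_eq Bool N).subset (fun w hw => hw.1))
  rintro w (rfl | rfl)
  · exact ⟨suf_length h, hZ.suffix (suf_suffix _ _)⟩
  · exact ⟨suf_length h', hZ'.suffix (suf_suffix _ _)⟩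

lemma two_le_rs (O : LenOrder l m n) (hl : ∀ i, 2 ≤ l i) (hm : ∀ i, 2 ≤ m i)
    (hn : ∀ i, l i + 2 ≤ n i) (N : ℕ) (hN : 1 ≤ N) : 2 ≤ (RSset l m n N).ncard := by
  have key : ∀ i, (Ew l m n i).length < N → N ≤ (Xw l m n i).length →
      2 ≤ (RSset l m n N).ncard := by
    intro i h1 h2
    have h3 := h2.trans (O.xy i)
    exact two_le_of (rs_X l m n hl hm hn i) (rs_Y l m n hl hm hn i) h2 h3
      (suf_ne (by simp) (Ew_Xw l m n hm hn i) (Ew_Yw l m n hm hn i) h1 h2 h3)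
  rcases find_interval hm hn N with hN' | ⟨i, hN1, hN2⟩
  · exact key 0 (by rw [len_E]; exact hN) (hN'.trans (O.ax 0))
  · by_cases hY : N ≤ (Yw l m n i).length
    · have h3 : N ≤ (Yw l m n (i + 1)).length :=
        hN2.trans ((O.ax _).trans (O.xy _))
      exact two_le_of (rs_Y l m n hl hm hn i) (rs_Y l m n hl hm hn (i + 1)) hY h3
        (suf_ne (by simp) (Aw_Yw l m n hm hn i) (Aw_succ l m n hm hn i _) hN1 hY h3)
    · have := O.ey i
      exact key (i + 1) (by omega) (hN2.trans (O.ax _))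

lemma complexity_le (O : LenOrder l m n) (hl : ∀ i, 2 ≤ l i) (hm : ∀ i, 2 ≤ m i)
    (hn : ∀ i, l i + 2 ≤ n i) (N : ℕ) : complexityFn (limWord l m n 0) N ≤ 3 * N + 1 := by
  induction N with
  | zero => rw [complexity_zero]
  | succ N ih =>
    rw [complexity_succ l m n hm]
    have := rs_le_three O hl hm hn N
    omega

lemma le_complexity (O : LenOrder l m n) (hl : ∀ i, 2 ≤ l i) (hm : ∀ i, 2 ≤ m i)
    (hn : ∀ i, l i + 2 ≤ n i) (N : ℕ) : 2 * (N + 1) ≤ complexityFn (limWord l m n 0) (N + 1) := by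
  induction N with
  | zero =>
    rw [complexity_succ l m n hm, complexity_zero]
    have hmem : [] ∈ RSset l m n 0 :=
      ⟨rfl, (rs_X l m n hl hm hn 0).suffix (List.nil_suffix)⟩
    have : 0 < (RSset l m n 0).ncard := (Set.ncard_pos
      ((List.finite_length_eq Bool 0).subset (fun w hw => hw.1))).2 ⟨_, hmem⟩
    omega
  | succ N ih =>
    rw [complexity_succ l m n hm]
    have := two_le_rs O hl hm hn (N + 1) (by omega)
    omega

lemma complexity_le' (O : LenOrder l m n) (hl : ∀ i, 2 ≤ l i) (hm : ∀ i, 2 ≤ m i)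
    (hn : ∀ i, l i + 2 ≤ n i) (i k : ℕ)
    (hk : (Yw l m n i).length + 1 + k ≤ (Aw l m n (i + 1)).length) :
    complexityFn (limWord l m n 0) ((Yw l m n i).length + 1 + k) ≤
      3 * ((Yw l m n i).length + 1) + 1 + 2 * k := by
  induction k with
  | zero => exact complexity_le O hl hm hn _
  | succ k ih =>
    have ih := ih (by omega)
    rw [← add_assoc, complexity_succ l m n hm]
    have := rs_le_two O hl hm hn ((Yw l m n i).length + 1 + k) i (by omega) (by omega)
    omega

lemma complexity_A (O : LenOrder l m n) (hl : ∀ i, 2 ≤ l i) (hm : ∀ i, 2 ≤ m i)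
    (hn : ∀ i, l i + 2 ≤ n i) (i : ℕ) (hlt : (Yw l m n i).length < (Aw l m n (i + 1)).length) :
    complexityFn (limWord l m n 0) (Aw l m n (i + 1)).length ≤
      2 * (Aw l m n (i + 1)).length + (Yw l m n i).length + 2 := by
  have := complexity_le' O hl hm hn i ((Aw l m n (i + 1)).length - (Yw l m n i).length - 1)
    (by omega)
  have e : (Yw l m n i).length + 1 + ((Aw l m n (i + 1)).length - (Yw l m n i).length - 1) =
    (Aw l m n (i + 1)).length := by omega
  rw [e] at this
  omega

end counting

/-! ### Numerical facts -/

/-- The parameters written through `x i = 4 ^ (2 ^ i)`. -/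
structure Params (l m n x : ℕ → ℕ) : Prop where
  l_eq : ∀ i, l i = 16 * x i
  m_eq : ∀ i, m i = x i ^ 4
  n_eq : ∀ i, n i = x i ^ 5
  x_zero : x 0 = 4
  x_succ : ∀ i, x (i + 1) = x i ^ 2

section params
variable {l m n x : ℕ → ℕ}

lemma Params.x_ge (P : Params l m n x) (i : ℕ) : 4 ≤ x i := by
  induction i with
  | zero => rw [P.x_zero]
  | succ i ih => rw [P.x_succ]; nlinarith

lemma Params.x_ge' (P : Params l m n x) (i : ℕ) : i + 1 ≤ x i := by
  induction i with
  | zero => rw [P.x_zero]; omega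
  | succ i ih => have := P.x_ge i; rw [P.x_succ]; nlinarith

lemma Params.hl (P : Params l m n x) (i : ℕ) : 2 ≤ l i := by
  have := P.x_ge i; rw [P.l_eq]; omega

lemma Params.hm (P : Params l m n x) (i : ℕ) : 2 ≤ m i := by
  have := P.x_ge i
  rw [P.m_eq]
  calc 2 ≤ 4 ^ 4 := by norm_num
    _ ≤ x i ^ 4 := Nat.pow_le_pow_left this 4

lemma Params.hn (P : Params l m n x) (i : ℕ) : l i + 2 ≤ n i := by
  have h := P.x_ge i
  rw [P.l_eq, P.n_eq]
  have h4 : 4 ^ 4 ≤ x i ^ 4 := Nat.pow_le_pow_left h 4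
  have : x i ^ 5 = x i ^ 4 * x i := by ring
  rw [this]
  nlinarith

lemma Params.ratio (P : Params l m n x) (i : ℕ) :
    4 * (UV l m n i).2 = x i * (UV l m n i).1 := by
  induction i with
  | zero => simp [UV, P.x_zero]
  | succ i ih =>
    simp only [UV, P.l_eq, P.m_eq, P.n_eq, P.x_succ]
    calc 4 * (x i ^ 4 * (UV l m n i).1 + x i ^ 5 * (UV l m n i).2)
        = 4 * x i ^ 4 * (UV l m n i).1 + x i ^ 5 * (4 * (UV l m n i).2) := by ring
      _ = x i ^ 6 * (UV l m n i).1 + 4 * x i ^ 3 * (x i * (UV l m n i).1) := by rw [ih]; ring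
      _ = x i ^ 6 * (UV l m n i).1 + 4 * x i ^ 3 * (4 * (UV l m n i).2) := by rw [ih]
      _ = _ := by ring

lemma Params.U_pos (P : Params l m n x) (i : ℕ) : 1 ≤ (UV l m n i).1 := by
  induction i with
  | zero => simp [UV]
  | succ i ih =>
    simp only [UV]
    have := P.hm i
    nlinarith

lemma Params.U_le_V (P : Params l m n x) (i : ℕ) : (UV l m n i).1 ≤ (UV l m n i).2 := by
  have h1 := P.ratio i
  have h2 := P.x_ge i
  nlinarith

lemma Params.e_le (P : Params l m n x) (i : ℕ) : eL l m n i ≤ 2 * (UV l m n i).1 := by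
  induction i with
  | zero => simp [eL]
  | succ i ih =>
    simp only [eL, UV]
    have := P.hm i
    have := P.U_pos i
    nlinarith

lemma Params.Y_le (P : Params l m n x) (i : ℕ) :
    ((Yw l m n i).length + 2) * (i + 1) ≤ (Aw l m n (i + 1)).length := by
  rw [len_Y, len_A]
  have h1 := P.e_le i
  have h2 := P.U_le_V i
  have h3 := P.U_pos i
  have h4 := P.hn i
  have h5 := P.hl i
  have hY : eL l m n i + (n i - 1) * (UV l m n i).2 + 2 ≤ 4 * (n i * (UV l m n i).2) := by
    obtain ⟨k, hk⟩ : ∃ k, n i = k + 1 := ⟨n i - 1, by omega⟩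
    rw [hk]
    simp only [Nat.add_sub_cancel]
    have : 3 ≤ k := by omega
    nlinarith
  have hV : n i * (UV l m n i).2 ≤ (UV l m n (i + 1)).2 := by
    simp only [UV]; omega
  have hL : 4 * (i + 1) ≤ l (i + 1) := by
    rw [P.l_eq]
    have := P.x_ge' (i + 1)
    omega
  calc _ ≤ 4 * (n i * (UV l m n i).2) * (i + 1) := Nat.mul_le_mul_right _ hY
    _ ≤ 4 * (UV l m n (i + 1)).2 * (i + 1) :=
        Nat.mul_le_mul_right _ (Nat.mul_le_mul_left _ hV)
    _ = (4 * (i + 1)) * (UV l m n (i + 1)).2 := by ring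
    _ ≤ l (i + 1) * (UV l m n (i + 1)).2 := Nat.mul_le_mul_right _ hL
    _ ≤ _ := by omega

lemma Params.Y_lt (P : Params l m n x) (i : ℕ) :
    (Yw l m n i).length < (Aw l m n (i + 1)).length := by
  have := P.Y_le i
  nlinarith

lemma Params.order (P : Params l m n x) : LenOrder l m n where
  xy i := by
    rw [len_X, len_Y]
    have h : m i ≤ n i := by
      rw [P.m_eq, P.n_eq]
      exact Nat.pow_le_pow_right (by have := P.x_ge i; omega) (by omega)
    have := Nat.mul_le_mul (Nat.sub_le_sub_right h 1) (P.U_le_V i)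
    omega
  ya i := (P.Y_lt i).le
  xe i := by
    rw [len_X, len_E]
    simp only [eL]
    have := Nat.mul_le_mul_right (UV l m n i).1 (Nat.sub_le (m i) 1)
    omega
  ey i := by
    rw [len_E, len_Y]
    simp only [eL]
    have hr := P.ratio i
    have hx := P.x_ge i
    have hU := P.U_pos i
    have hn := P.hn i
    obtain ⟨k, hk⟩ : ∃ k, n i = k + 1 := ⟨n i - 1, by omega⟩
    rw [P.n_eq] at hk
    rw [P.n_eq, P.m_eq, P.l_eq, hk, Nat.add_sub_cancel, add_assoc]
    apply Nat.add_le_add_left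
    have key : 4 * x i ^ 4 + 32 * x i ^ 2 ≤ k * x i := by
      have h4 : 4 ^ 4 ≤ x i ^ 4 := Nat.pow_le_pow_left hx 4
      have e : (k + 1) * x i = x i ^ 6 := by rw [← hk]; ring
      have h2 : 16 ≤ x i ^ 2 := by nlinarith
      have e4 : x i ^ 4 = x i ^ 2 * x i ^ 2 := by ring
      have e6 : x i ^ 6 = x i ^ 2 * x i ^ 4 := by ring
      have h3 : 16 * x i ^ 4 ≤ x i ^ 6 := by rw [e6]; exact Nat.mul_le_mul_right _ h2
      have h5 : 16 * x i ^ 2 ≤ x i ^ 4 := by rw [e4]; exact Nat.mul_le_mul_right _ h2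
      have h6 : x i ≤ x i ^ 2 := by nlinarith
      nlinarith
    have := Nat.mul_le_mul_right (UV l m n i).1 key
    have e1 : k * x i * (UV l m n i).1 = 4 * (k * (UV l m n i).2) := by
      rw [mul_assoc, ← hr]; ring
    have e2 : (4 * x i ^ 4 + 32 * x i ^ 2) * (UV l m n i).1 =
        4 * (x i ^ 4 * (UV l m n i).1 + 2 * (16 * x i * (UV l m n i).2)) := by
      have : 4 * (x i ^ 4 * (UV l m n i).1 + 2 * (16 * x i * (UV l m n i).2)) =
        4 * x i ^ 4 * (UV l m n i).1 + 32 * x i * (4 * (UV l m n i).2) := by ring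
      rw [this, hr]; ring
    omega
  ax i := by
    rw [len_A, len_X]
    apply Nat.add_le_add_left
    have hr := P.ratio i
    have hx := P.x_ge i
    have hm := P.hm i
    obtain ⟨k, hk⟩ : ∃ k, m i = k + 1 := ⟨m i - 1, by omega⟩
    rw [P.m_eq] at hk
    rw [P.m_eq, P.l_eq, hk, Nat.add_sub_cancel]
    have e : 16 * x i * (UV l m n i).2 = 4 * x i ^ 2 * (UV l m n i).1 := by
      have : 16 * x i * (UV l m n i).2 = 4 * x i * (4 * (UV l m n i).2) := by ring
      rw [this, hr]; ring
    rw [e]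
    apply Nat.mul_le_mul_right
    have h2 : 16 ≤ x i ^ 2 := by nlinarith
    have e4 : x i ^ 4 = x i ^ 2 * x i ^ 2 := by ring
    nlinarith

/-! ### Frequencies -/

lemma Params.gap (P : Params l m n x) (i : ℕ) :
    ∃ α β : ℝ, ((PQ l m n i).1 : ℝ) = α * (UV l m n i).1 ∧
      ((PQ l m n i).2 : ℝ) = β * (UV l m n i).2 ∧ α - β ≤ 1 ∧
      1 / 4 + 12 / (x i : ℝ) ^ 2 ≤ α - β := by
  induction i with
  | zero => exact ⟨1, 0, by simp [PQ, UV], by simp [PQ], by norm_num, by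
      rw [P.x_zero]; norm_num⟩
  | succ i ih =>
    obtain ⟨α, β, h1, h2, h3, h4⟩ := ih
    have hr : 4 * ((UV l m n i).2 : ℝ) = x i * (UV l m n i).1 := by exact_mod_cast P.ratio i
    have hV : ((UV l m n i).2 : ℝ) = x i * (UV l m n i).1 / 4 := by linarith
    have hx : (4 : ℝ) ≤ x i := by exact_mod_cast P.x_ge i
    have hU : (1 : ℝ) ≤ (UV l m n i).1 := by exact_mod_cast P.U_pos i
    rw [hV] at h2
    simp only [PQ, UV, P.l_eq, P.m_eq, P.n_eq, P.x_succ]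
    push_cast
    rw [h1, h2, hV]
    generalize ((UV l m n i).1 : ℝ) = U at *
    generalize (x i : ℝ) = y at *
    have hy : (16 : ℝ) ≤ y ^ 2 := by nlinarith
    have hpos : (0 : ℝ) < y ^ 2 + 4 := by positivity
    have hdiff : (y ^ 2 * α + 4 * β) / (y ^ 2 + 4) - (4 * α + y ^ 2 * β) / (y ^ 2 + 4) =
        (α - β) - 8 * (α - β) / (y ^ 2 + 4) := by
      field_simp; ring
    have hD : 0 ≤ α - β := le_trans (by positivity) h4
    refine ⟨(y ^ 2 * α + 4 * β) / (y ^ 2 + 4), (4 * α + y ^ 2 * β) / (y ^ 2 + 4), ?_, ?_, ?_, ?_⟩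
    · field_simp; ring
    · field_simp; ring
    · rw [hdiff]
      have : 0 ≤ 8 * (α - β) / (y ^ 2 + 4) := by positivity
      linarith
    · rw [hdiff]
      have a1 : 8 * (α - β) / (y ^ 2 + 4) ≤ 8 / y ^ 2 := by
        apply div_le_div₀ <;> linarith
      have a2 : 12 / (y ^ 2) ^ 2 ≤ 4 / y ^ 2 := by
        rw [div_le_div_iff₀ (by positivity) (by positivity)]
        nlinarith
      have a3 : 12 / y ^ 2 = 8 / y ^ 2 + 4 / y ^ 2 := by ring
      linarith

lemma Params.no_freq (P : Params l m n x) :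
    ¬ ∀ a : Bool, ∃ f : ℝ, ∀ w : ℕ → List Bool,
          (∀ k, IsFactor (limWord l m n 0) (w k)) →
          Filter.Tendsto (fun k => (w k).length) Filter.atTop Filter.atTop →
          Filter.Tendsto (fun k => ((w k).count a : ℝ) / ((w k).length : ℝ))
            Filter.atTop (nhds f) := by
  intro h
  obtain ⟨f, hf⟩ := h false
  have hlenU : ∀ i, (subComp l m n i 0 [false]).length = (UV l m n i).1 := fun i => by
    simp [length_subComp]
  have hlenV : ∀ i, (subComp l m n i 0 [true]).length = (UV l m n i).2 := fun i => by
    simp [length_subComp]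
  have hcU : ∀ i, (subComp l m n i 0 [false]).count false = (PQ l m n i).1 := fun i => by
    simp [count_subComp]
  have hcV : ∀ i, (subComp l m n i 0 [true]).count false = (PQ l m n i).2 := fun i => by
    simp [count_subComp]
  have hUi : ∀ i, i ≤ (UV l m n i).1 := fun i => by
    rw [← hlenU, ← wordIter_eq]
    exact (wordIter_length l m n P.hm 0 i).le
  have tU : Filter.Tendsto (fun k => (UV l m n k).1) Filter.atTop Filter.atTop :=
    Filter.tendsto_atTop_mono hUi Filter.tendsto_id
  have tV : Filter.Tendsto (fun k => (UV l m n k).2) Filter.atTop Filter.atTop :=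
    Filter.tendsto_atTop_mono (fun i => P.U_le_V i) tU
  have f1 := hf (fun i => subComp l m n i 0 [false])
    (fun i => by
      rw [isFactor_iff l m n P.hm]
      exact ⟨i, by rw [wordIter_eq]⟩) (by simpa only [hlenU] using tU)
  have f2 := hf (fun i => subComp l m n i 0 [true])
    (fun i => by
      rw [isFactor_iff l m n P.hm]
      refine ⟨i + 1, ?_⟩
      rw [wordIter_eq, subComp_succ, subw_single]
      have : blk l m n (0 + i) false = (List.replicate (m i) false ++
          List.replicate (l i - 1) true) ++ [true] := by
        have := P.hl i
        rw [List.append_assoc, ← List.replicate_succ']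
        have e : l i - 1 + 1 = l i := by omega
        rw [e]; simp [blk]
      rw [this, subComp_append]
      exact (List.suffix_append _ _).isInfix) (by simpa only [hlenV] using tV)
  have f3 := f1.sub f2
  rw [sub_self] at f3
  have := ge_of_tendsto f3 (b := (1 / 4 : ℝ)) (Filter.Eventually.of_forall fun i => by
    obtain ⟨α, β, h1, h2, h3, h4⟩ := P.gap i
    simp only [hlenU, hlenV, hcU, hcV]
    have hU : (1 : ℝ) ≤ (UV l m n i).1 := by exact_mod_cast P.U_pos i
    have hV : (1 : ℝ) ≤ (UV l m n i).2 := by exact_mod_cast (P.U_pos i).trans (P.U_le_V i)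
    rw [h1, h2, mul_div_assoc, mul_div_assoc, div_self (by positivity), div_self (by positivity)]
    have : (0 : ℝ) ≤ 12 / (x i : ℝ) ^ 2 := by positivity
    linarith)
  norm_num at this

lemma Params.liminf (P : Params l m n x) :
    Filter.liminf (fun k => (complexityFn (limWord l m n 0) k : ℝ) / (k : ℝ))
        Filter.atTop = 2 := by
  have hlow : ∀ k : ℕ, 1 ≤ k → (2 : ℝ) ≤ (complexityFn (limWord l m n 0) k : ℝ) / (k : ℝ) := by
    intro k hk
    obtain ⟨j, rfl⟩ : ∃ j, k = j + 1 := ⟨k - 1, by omega⟩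
    rw [le_div_iff₀ (by positivity)]
    exact_mod_cast le_complexity P.order P.hl P.hm P.hn j
  have hlow' : ∀ᶠ k : ℕ in Filter.atTop,
      (2 : ℝ) ≤ (complexityFn (limWord l m n 0) k : ℝ) / (k : ℝ) :=
    (Filter.eventually_ge_atTop 1).mono hlow
  have hfreq : ∀ ε : ℝ, 0 < ε → ∃ᶠ k : ℕ in Filter.atTop,
      (complexityFn (limWord l m n 0) k : ℝ) / (k : ℝ) ≤ 2 + ε := by
    intro ε hε
    rw [Filter.frequently_atTop]
    intro N
    obtain ⟨K, hK⟩ := exists_nat_gt (1 / ε)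
    let i := max N K
    have hY := P.Y_le i
    have hA := complexity_A P.order P.hl P.hm P.hn i (P.Y_lt i)
    refine ⟨(Aw l m n (i + 1)).length, ?_, ?_⟩
    · have : N ≤ i := le_max_left _ _
      nlinarith
    · have hi : (1 / ε) < (i : ℝ) + 1 := by
        have : (K : ℝ) ≤ i := by exact_mod_cast le_max_right N K
        linarith
      have hpos : (0 : ℝ) < (Aw l m n (i + 1)).length := by
        have : 0 < (Aw l m n (i + 1)).length := by nlinarith
        exact_mod_cast this
      rw [div_le_iff₀ hpos]
      have hY' : (((Yw l m n i).length : ℝ) + 2) * (i + 1) ≤ (Aw l m n (i + 1)).length := by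
        exact_mod_cast hY
      have hA' : (complexityFn (limWord l m n 0) (Aw l m n (i + 1)).length : ℝ) ≤
        2 * (Aw l m n (i + 1)).length + (Yw l m n i).length + 2 := by exact_mod_cast hA
      have h1 : 1 ≤ ε * ((i : ℝ) + 1) := by
        rw [div_lt_iff₀ hε] at hi
        linarith
      have hy0 : (0 : ℝ) ≤ ((Yw l m n i).length : ℝ) + 2 := by positivity
      have h2 : ((Yw l m n i).length : ℝ) + 2 ≤ ε * (Aw l m n (i + 1)).length := by
        calc ((Yw l m n i).length : ℝ) + 2 = (((Yw l m n i).length : ℝ) + 2) * 1 := by ring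
          _ ≤ (((Yw l m n i).length : ℝ) + 2) * (ε * ((i : ℝ) + 1)) :=
            mul_le_mul_of_nonneg_left h1 hy0
          _ = ε * ((((Yw l m n i).length : ℝ) + 2) * (i + 1)) := by ring
          _ ≤ _ := mul_le_mul_of_nonneg_left hY' hε.le
      linarith
  apply le_antisymm
  · apply le_of_forall_pos_le_add
    intro ε hε
    exact Filter.liminf_le_of_frequently_le (hfreq ε hε) ⟨2, by simpa using hlow'⟩
  · refine Filter.le_liminf_of_le ?_ hlow'
    exact Filter.IsCoboundedUnder.of_frequently_le (hfreq 1 one_pos)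

end params

theorem stmt19 (l m n : ℕ → ℕ) (hl : ∀ i, l i = 2 ^ (2 * 2 ^ i + 4))
    (hm : ∀ i, m i = 2 ^ (8 * 2 ^ i)) (hn : ∀ i, n i = 2 ^ (10 * 2 ^ i)) :
    (∀ k : ℕ, 1 ≤ k → complexityFn (limWord l m n 0) k ≤ 3 * k + 1) ∧
      Filter.liminf (fun k => (complexityFn (limWord l m n 0) k : ℝ) / (k : ℝ))
        Filter.atTop = 2 ∧
      ¬ ∀ a : Bool, ∃ f : ℝ, ∀ w : ℕ → List Bool,
          (∀ k, IsFactor (limWord l m n 0) (w k)) →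
          Filter.Tendsto (fun k => (w k).length) Filter.atTop Filter.atTop →
          Filter.Tendsto (fun k => ((w k).count a : ℝ) / ((w k).length : ℝ))
            Filter.atTop (nhds f) := by
  have P : Params l m n (fun i => 2 ^ (2 * 2 ^ i)) :=
    { l_eq := fun i => by rw [hl]; ring
      m_eq := fun i => by rw [hm, ← pow_mul]; congr 1; ring
      n_eq := fun i => by rw [hn, ← pow_mul]; congr 1; ring
      x_zero := by norm_num
      x_succ := fun i => by rw [← pow_mul]; congr 1; ring }
  exact ⟨fun k _ => complexity_le P.order P.hl P.hm P.hn k, P.liminf, P.no_freq⟩
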